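/- arXiv:1308.2432 — 2 statements merged into one kernel-verified Lean document; each statement's English description precedes it below -/
import Mathlib

section
/- For every group G and all finite groups F and F', there exist an action of the wreath product F ≀ F' on the finite set F × F' and an injective group homomorphism from (G ≀ F) ≀ F' into the permutational wreath product G ≀_{F×F'} (F ≀ F') := (∏_{(f,f') ∈ F×F'} G) ⋊ (F ≀ F'), where F ≀ F' acts on ∏_{(f,f') ∈ F×F'} G by permuting the coordinates according to that action. -/
/-- The action of a group `F` on `F → G` permuting the coordinates:
`φ(k)((g_f)_{f ∈ F}) = (g_{f·k})_{f ∈ F}`. -/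
def wreathAction (G F : Type*) [Group G] [Group F] : F →* MulAut (F → G) where
  toFun k :=
    { toFun := fun g f => g (f * k)
      invFun := fun g f => g (f * k⁻¹)
      left_inv := fun g => by funext f; simp [mul_assoc]
      right_inv := fun g => by funext f; simp [mul_assoc]
      map_mul' := fun _ _ => rfl }
  map_one' := by
    ext g f
    simp
  map_mul' k₁ k₂ := by
    ext g f
    simp [mul_assoc]

/-- The (restricted) wreath product `G ≀ F`: the semidirect product `(∏_{f ∈ F} G) ⋊_φ F`
with `φ(k)((g_f)_{f ∈ F}) = (g_{f·k})_{f ∈ F}`. -/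
abbrev WreathProduct (G F : Type*) [Group G] [Group F] :=
  (F → G) ⋊[wreathAction G F] F

/-- Given an action `ρ : W →* Equiv.Perm X`, the induced action of `W` on `X → G` permuting
the coordinates according to `ρ`. -/
def permAction (G : Type*) {W X : Type*} [Group G] [Group W] (ρ : W →* Equiv.Perm X) :
    W →* MulAut (X → G) where
  toFun u :=
    { toFun := fun g x => g ((ρ u)⁻¹ x)
      invFun := fun g x => g (ρ u x)
      left_inv := fun g => by funext x; simp
      right_inv := fun g => by funext x; simp
      map_mul' := fun _ _ => rfl }
  map_one' := by
    ext g x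
    simp
  map_mul' u₁ u₂ := by
    ext g x
    simp

/-- The action of `F ≀ F'` on `F × F'`; the inverse of `(h, k)` sends `(f, f')` to
`(f * h f', f' * k)`. -/
def rhoAux (F F' : Type*) [Group F] [Group F'] :
    WreathProduct F F' →* Equiv.Perm (F × F') where
  toFun u :=
    { toFun := fun p => (p.1 * (u.left (p.2 * u.right⁻¹))⁻¹, p.2 * u.right⁻¹)
      invFun := fun p => (p.1 * u.left p.2, p.2 * u.right)
      left_inv := fun p => by simp
      right_inv := fun p => by simp }
  map_one' := by
    ext p <;> simp
  map_mul' u v := by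
    ext p <;> simp [wreathAction, mul_assoc]

theorem rhoAux_inv_apply {F F' : Type*} [Group F] [Group F'] (u : WreathProduct F F')
    (p : F × F') : (rhoAux F F' u)⁻¹ p = (p.1 * u.left p.2, p.2 * u.right) := rfl

/-- The embedding of `(G ≀ F) ≀ F'` into the permutational wreath product. -/
def psiAux (G F F' : Type*) [Group G] [Group F] [Group F'] :
    WreathProduct (WreathProduct G F) F' →*
      (F × F' → G) ⋊[permAction G (rhoAux F F')] WreathProduct F F' where
  toFun w := ⟨fun p => (w.left p.2).left p.1, ⟨fun f' => (w.left f').right, w.right⟩⟩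
  map_one' := rfl
  map_mul' _ _ := rfl

/-- For every group `G` and all finite groups `F` and `F'`, there exist an
action of the wreath product `F ≀ F'` on the finite set `F × F'` and an injective group
homomorphism from `(G ≀ F) ≀ F'` into the permutational wreath product
`G ≀_{F×F'} (F ≀ F') = (∏_{(f,f') ∈ F×F'} G) ⋊ (F ≀ F')`, where `F ≀ F'` permutes the
coordinates according to that action. -/
theorem stmt_16 (G F F' : Type*) [Group G] [Group F] [Finite F] [Group F'] [Finite F'] :
    ∃ (ρ : WreathProduct F F' →* Equiv.Perm (F × F'))
      (ψ : WreathProduct (WreathProduct G F) F' →*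
        (F × F' → G) ⋊[permAction G ρ] WreathProduct F F'),
      Function.Injective ψ := by
  refine ⟨rhoAux F F', psiAux G F F', ?_⟩
  intro a b h
  have h1 := congrArg SemidirectProduct.left h
  have h2 := congrArg (fun x => x.right.left) h
  have h3 := congrArg (fun x => x.right.right) h
  refine SemidirectProduct.ext ?_ h3
  funext f'
  refine SemidirectProduct.ext ?_ (congrFun h2 f')
  funext f
  exact congrFun h1 (f, f')
end

section
/- Let G be a group, Y a topological space with a continuous G-action, X ⊆ Y a subspace, and H : Y × [0,1] → Y a continuous map such that H(y,0) ∈ X for all y ∈ Y, H(x,0) = x for all x ∈ X, H(y,1) = y for all y ∈ Y, and H(H(y,t'),t) = H(y, t·t') for all y ∈ Y and t,t' ∈ [0,1]. Define Ω : ⨿_{j=0}^∞ ((G × [0,1])^j × G × X) → Y inductively by Ω(g₀,x) := g₀·x and Ω(g_j,t_j,g_{j−1},…) := g_j · H(Ω(g_{j−1},…), t_j) for j ≥ 1. Then Ψ := (z ↦ H(Ω(z),0)) is a strong homotopy action of G on X. -/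
/-- A *strong homotopy action* of a group `G` on a topological space `X`: a continuous map
`Ψ : ∐_{j=0}^∞ ((G × [0,1])^j × G × X) → X` (given here by its restrictions `Ψ j` to the
summands, so continuity of `Ψ` is the continuity of every `Ψ j`) satisfying the conditions
(1)–(6).  A point of the `j`-th summand is written `(c, g₀, x)` where
`c i = (g_{i+1}, t_{i+1})`, so that `(c, g₀, x)` encodes the tuple
`(g_j, t_j, g_{j-1}, …, g_1, t_1, g_0, x)`. -/
def IsStrongHomotopyAction (G X : Type*) [Group G] [TopologicalSpace G] [TopologicalSpace X]
    (Ψ : ∀ j : ℕ, ((Fin j → G × unitInterval) × G × X) → X) : Prop :=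
  -- `Ψ` is continuous
  (∀ j : ℕ, Continuous (Ψ j)) ∧
  -- (1) `Ψ(…, g_l, 0, g_{l-1}, …) = Ψ(…, g_l, Ψ(g_{l-1}, …))`
  (∀ (j : ℕ) (c : Fin j → G × unitInterval) (g₀ : G) (x : X) (l : Fin j),
    (c l).2 = 0 →
    Ψ j (c, g₀, x) =
      Ψ (j - (l.1 + 1))
        (fun i => c ⟨l.1 + 1 + i.1, by have := i.isLt; have := l.isLt; omega⟩, (c l).1,
          Ψ l.1 (fun i => c ⟨i.1, by have := i.isLt; have := l.isLt; omega⟩, g₀, x))) ∧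
  -- (2) `Ψ(…, g_l, 1, g_{l-1}, …) = Ψ(…, g_l·g_{l-1}, …)`, innermost case …
  (∀ (j : ℕ) (c : Fin j → G × unitInterval) (g₀ : G) (x : X) (h : 0 < j),
    (c ⟨0, h⟩).2 = 1 →
    Ψ j (c, g₀, x) =
      Ψ (j - 1) (fun i => c ⟨i.1 + 1, by have := i.isLt; omega⟩, (c ⟨0, h⟩).1 * g₀, x)) ∧
  -- … and interior case
  (∀ (j : ℕ) (c : Fin j → G × unitInterval) (g₀ : G) (x : X) (l : Fin j),
    1 ≤ l.1 → (c l).2 = 1 →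
    Ψ j (c, g₀, x) =
      Ψ (j - 1)
        (fun i =>
          if i.1 < l.1 - 1 then c ⟨i.1, by have := i.isLt; omega⟩
          else if i.1 = l.1 - 1 then
            ((c l).1 * (c ⟨l.1 - 1, by have := l.isLt; omega⟩).1,
              (c ⟨l.1 - 1, by have := l.isLt; omega⟩).2)
          else c ⟨i.1 + 1, by have := i.isLt; omega⟩, g₀, x)) ∧
  -- (3) `Ψ(e, t_j, g_{j-1}, …) = Ψ(g_{j-1}, …)`
  (∀ (j : ℕ) (c : Fin j → G × unitInterval) (g₀ : G) (x : X) (h : 0 < j),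
    (c ⟨j - 1, by omega⟩).1 = 1 →
    Ψ j (c, g₀, x) = Ψ (j - 1) (fun i => c ⟨i.1, by have := i.isLt; omega⟩, g₀, x)) ∧
  -- (4) `Ψ(…, t_l, e, t_{l-1}, …) = Ψ(…, t_l·t_{l-1}, …)`
  (∀ (j : ℕ) (c : Fin j → G × unitInterval) (g₀ : G) (x : X) (m : Fin j) (h : m.1 + 1 < j),
    (c m).1 = 1 →
    Ψ j (c, g₀, x) =
      Ψ (j - 1)
        (fun i =>
          if i.1 < m.1 then c ⟨i.1, by have := i.isLt; omega⟩
          else if i.1 = m.1 then ((c ⟨m.1 + 1, h⟩).1, (c ⟨m.1 + 1, h⟩).2 * (c m).2)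
          else c ⟨i.1 + 1, by have := i.isLt; omega⟩, g₀, x)) ∧
  -- (5) `Ψ(…, t_1, e, x) = Ψ(…, x)`
  (∀ (j : ℕ) (c : Fin j → G × unitInterval) (x : X) (h : 0 < j),
    Ψ j (c, 1, x) =
      Ψ (j - 1) (fun i => c ⟨i.1 + 1, by have := i.isLt; omega⟩, (c ⟨0, h⟩).1, x)) ∧
  -- (6) `Ψ(e, x) = x`
  (∀ (c : Fin 0 → G × unitInterval) (x : X), Ψ 0 (c, (1 : G), x) = x)

/-- The iteration underlying `Ω`, for total sequences. -/
def iterW {G Y : Type*} [SMul G Y] (H : Y × unitInterval → Y) (d : ℕ → G × unitInterval) (y : Y) :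
    ℕ → Y
  | 0 => y
  | n + 1 => (d n).1 • H (iterW H d y n, (d n).2)

theorem iterW_shift {G Y : Type*} [SMul G Y] (H : Y × unitInterval → Y)
    (d d' : ℕ → G × unitInterval) (y y' : Y) (a b : ℕ)
    (h0 : iterW H d y a = iterW H d' y' b) (k : ℕ)
    (h : ∀ i, i < k → d (a + i) = d' (b + i)) :
    iterW H d y (a + k) = iterW H d' y' (b + k) := by
  induction k with
  | zero => exact h0
  | succ k ih =>
    have h1 := ih (fun i hi => h i (by omega))
    have h2 := h k (by omega)
    change (d (a + k)).1 • H (iterW H d y (a + k), (d (a + k)).2)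
      = (d' (b + k)).1 • H (iterW H d' y' (b + k), (d' (b + k)).2)
    rw [h1, h2]

theorem iterW_congr {G Y : Type*} [SMul G Y] (H : Y × unitInterval → Y)
    (d d' : ℕ → G × unitInterval) (y : Y) (k : ℕ)
    (h : ∀ i, i < k → d i = d' i) :
    iterW H d y k = iterW H d' y k := by
  have := iterW_shift H d d' y y 0 0 rfl k (fun i hi => by simpa using h i hi)
  simpa using this

/-- Let `G` be a group, `Y` a topological space with a continuous
`G`-action, `X ⊆ Y` a subspace, and `H : Y × [0,1] → Y` a continuous map with `H(y,0) ∈ X`,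
`H(x,0) = x` for `x ∈ X`, `H(y,1) = y`, and `H(H(y,t'),t) = H(y,t·t')`.  Define
`Ω : ∐_j ((G × [0,1])^j × G × X) → Y` inductively by `Ω(g₀,x) := g₀·x` and
`Ω(g_j,t_j,g_{j-1},…) := g_j · H(Ω(g_{j-1},…), t_j)`.  Then `Ψ := (z ↦ H(Ω(z),0))` is a
strong homotopy action of `G` on `X`. -/
theorem stmt_18 (G : Type*) [Group G] [TopologicalSpace G]
    (Y : Type*) [TopologicalSpace Y] [MulAction G Y] [ContinuousSMul G Y]
    (X : Set Y) (H : Y × unitInterval → Y)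
    (hHcont : Continuous H)
    (hH0mem : ∀ y : Y, H (y, 0) ∈ X)
    (hH0id : ∀ x ∈ X, H (x, 0) = x)
    (hH1 : ∀ y : Y, H (y, 1) = y)
    (hHmul : ∀ (y : Y) (t t' : unitInterval), H (H (y, t'), t) = H (y, t * t'))
    (Ω : ∀ j : ℕ, ((Fin j → G × unitInterval) × G × X) → Y)
    (hΩ0 : ∀ (c : Fin 0 → G × unitInterval) (g₀ : G) (x : X), Ω 0 (c, g₀, x) = g₀ • (x : Y))
    (hΩsucc : ∀ (j : ℕ) (c : Fin (j + 1) → G × unitInterval) (g₀ : G) (x : X),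
      Ω (j + 1) (c, g₀, x) =
        (c (Fin.last j)).1 • H (Ω j (fun i => c i.castSucc, g₀, x), (c (Fin.last j)).2)) :
    IsStrongHomotopyAction G X (fun j z => (⟨H (Ω j z, 0), hH0mem _⟩ : X)) := by
  have ext : ∀ (j : ℕ) (c : Fin j → G × unitInterval),
      ∃ d : ℕ → G × unitInterval, c = fun i => d i.1 := by
    intro j c
    refine ⟨fun i => if h : i < j then c ⟨i, h⟩ else (1, 1), ?_⟩
    funext i
    simp
  have key : ∀ (j : ℕ) (d : ℕ → G × unitInterval) (g : G) (x : X),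
      Ω j (fun i => d i.1, g, x) = iterW H d (g • (x : Y)) j := by
    intro j d g x
    induction j with
    | zero => exact hΩ0 _ _ _
    | succ j ih =>
      rw [hΩsucc]
      change (d j).1 • H (Ω j (fun i => d i.1, g, x), (d j).2) = _
      rw [ih]
      rfl
  have hfix : ∀ x ∈ X, ∀ t, H (x, t) = x := by
    intro x hx t
    have h := hHmul x t 0
    rw [hH0id x hx, mul_zero, hH0id x hx] at h
    exact h
  have hcont : ∀ j, Continuous (Ω j) := by
    intro j
    induction j with
    | zero =>
      have : Ω 0 = fun z => z.2.1 • (z.2.2 : Y) := by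
        funext ⟨c, g, x⟩
        exact hΩ0 _ _ _
      rw [this]
      fun_prop
    | succ j ih =>
      have : Ω (j + 1) = fun z => (z.1 (Fin.last j)).1 •
          H (Ω j (fun i => z.1 i.castSucc, z.2.1, z.2.2), (z.1 (Fin.last j)).2) := by
        funext ⟨c, g, x⟩
        exact hΩsucc _ _ _ _
      rw [this]
      fun_prop
  refine ⟨?_, ?_, ?_, ?_, ?_, ?_, ?_, ?_⟩
  · intro j
    have := hcont j
    exact Continuous.subtype_mk (by fun_prop) _
  · rintro j c g₀ x ⟨l, hl⟩ h0
    obtain ⟨d, rfl⟩ := ext j c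
    obtain ⟨k, rfl⟩ := Nat.exists_eq_add_of_le (show l + 1 ≤ j from hl)
    apply Subtype.ext
    change (d l).2 = 0 at h0
    refine congrArg (fun y => H (y, 0)) ?_
    refine (key _ d g₀ x).trans (Eq.trans ?_ (key _ (fun i => d (l + 1 + i)) _ _).symm)
    rw [show l + 1 + k - (l + 1) = 0 + k by omega]
    refine iterW_shift H _ _ _ _ (l + 1) 0 ?_ k (fun i _ => by simp)
    change (d l).1 • H (iterW H d (g₀ • (x : Y)) l, (d l).2) = (d l).1 • H (Ω l (fun i => d i.1, g₀, x), 0)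
    rw [key, h0]
  · intro j c g₀ x h h1
    obtain ⟨d, rfl⟩ := ext j c
    obtain ⟨k, rfl⟩ := Nat.exists_eq_add_of_le (show 1 ≤ j from h)
    apply Subtype.ext
    change (d 0).2 = 1 at h1
    refine congrArg (fun y => H (y, 0)) ?_
    refine (key _ d g₀ x).trans (Eq.trans ?_ (key _ (fun i => d (i + 1)) _ _).symm)
    rw [show 1 + k - 1 = 0 + k by omega]
    refine iterW_shift H _ _ _ _ 1 0 ?_ k (fun i _ => by simp [Nat.add_comm])
    change (d 0).1 • H (g₀ • (x : Y), (d 0).2) = ((d 0).1 * g₀) • (x : Y)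
    rw [h1, hH1, mul_smul]
  · rintro j c g₀ x ⟨l, hl⟩ hl1 h1
    obtain ⟨d, rfl⟩ := ext j c
    obtain ⟨m, rfl⟩ : ∃ m, l = m + 1 := ⟨l - 1, by simp at hl1; omega⟩
    obtain ⟨k, rfl⟩ := Nat.exists_eq_add_of_le (show m + 2 ≤ j by omega)
    apply Subtype.ext
    change (d (m + 1)).2 = 1 at h1
    refine congrArg (fun y => H (y, 0)) ?_
    refine (key _ d g₀ x).trans (Eq.trans ?_ (key _ (fun i => if i < m then d i
      else if i = m then ((d (m + 1)).1 * (d m).1, (d m).2) else d (i + 1)) _ _).symm)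
    rw [show m + 2 + k - 1 = m + 1 + k by omega]
    refine iterW_shift H _ _ _ _ (m + 2) (m + 1) ?_ k (fun i _ => ?_)
    · simp only [iterW, lt_irrefl, if_false, if_true]
      rw [h1, hH1, mul_smul, iterW_congr H d _ _ m]
      intro i hi
      simp [hi]
    · rw [if_neg (by omega), if_neg (by omega)]
      congr 1
      omega
  · intro j c g₀ x h h1
    obtain ⟨d, rfl⟩ := ext j c
    obtain ⟨k, rfl⟩ : ∃ k, j = k + 1 := ⟨j - 1, by omega⟩
    apply Subtype.ext
    change (d k).1 = 1 at h1
    change H (Ω (k + 1) (fun i => d i.1, g₀, x), 0) = H (Ω k (fun i => d i.1, g₀, x), 0)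
    rw [key, key]
    simp only [iterW]
    rw [h1, one_smul, hHmul, zero_mul]
  · rintro j c g₀ x ⟨m, hm⟩ h h1
    obtain ⟨d, rfl⟩ := ext j c
    change m + 1 < j at h
    obtain ⟨k, rfl⟩ := Nat.exists_eq_add_of_le (show m + 2 ≤ j by omega)
    apply Subtype.ext
    change (d m).1 = 1 at h1
    refine congrArg (fun y => H (y, 0)) ?_
    refine (key _ d g₀ x).trans (Eq.trans ?_ (key _ (fun i => if i < m then d i
      else if i = m then ((d (m + 1)).1, (d (m + 1)).2 * (d m).2) else d (i + 1)) _ _).symm)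
    rw [show m + 2 + k - 1 = m + 1 + k by omega]
    refine iterW_shift H _ _ _ _ (m + 2) (m + 1) ?_ k (fun i _ => ?_)
    · simp only [iterW, lt_irrefl, if_false, if_true]
      rw [h1, one_smul, hHmul, iterW_congr H d _ _ m]
      intro i hi
      simp [hi]
    · rw [if_neg (by omega), if_neg (by omega)]
      congr 1
      omega
  · intro j c x h
    obtain ⟨d, rfl⟩ := ext j c
    obtain ⟨k, rfl⟩ := Nat.exists_eq_add_of_le (show 1 ≤ j from h)
    apply Subtype.ext
    refine congrArg (fun y => H (y, 0)) ?_
    refine (key _ d 1 x).trans (Eq.trans ?_ (key _ (fun i => d (i + 1)) _ _).symm)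
    rw [show 1 + k - 1 = 0 + k by omega]
    refine iterW_shift H _ _ _ _ 1 0 ?_ k (fun i _ => by simp [Nat.add_comm])
    change (d 0).1 • H ((1 : G) • (x : Y), (d 0).2) = (d 0).1 • (x : Y)
    rw [one_smul, hfix _ x.2]
  · intro c x
    apply Subtype.ext
    change H (Ω 0 (c, 1, x), 0) = x
    rw [hΩ0, one_smul, hH0id _ x.2]
end
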